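/- arXiv:1311.0576 — 7 statements merged into one kernel-verified Lean document; each statement's English description precedes it below -/
import Mathlib

section
/- Fix θ > 0, u ≥ 0 and b < 1. Let A ∈ ℝ^{m×n}, y ∈ ℝ^m, x̃ ∈ ℝⁿ, and suppose (x*, r*) ∈ ℝⁿ × ℝ^m is a fixed point of the GENP-AMP iteration with these fixed parameters, i.e. x*_i = η( (u/(1+u))·x̃_i + (1/(1+u))·(x*_i + (Aᵀ r*)_i) ; θ ) for every i ∈ {1,…,n}, and r* = y − A x* + b·r*. Then x* is a global minimizer of the GENP-LASSO objective f(z) = (1/2)‖y − Az‖₂² + λ‖z‖₁ + (τ/2)‖x̃ − z‖₂² with parameters λ = (1+u)·θ·(1−b) and τ = u·(1−b). -/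
/-!
The objective is convex, so a point minimizes it as soon as `0` is a subgradient there. Let `v` be
the argument of the threshold at the fixed point `x`. Since `η(·; θ)` is the proximal map of
`θ‖·‖₁`, the vector `v - x` is a subgradient of `θ‖·‖₁` at `x`. Clearing denominators gives
`(1 + u)(v - x) = u(x̃ - x) + Aᵀr`, and the residual equation says `y - Ax = (1 - b)r`, so after
scaling by `1 - b ≥ 0` this subgradient cancels the gradients `-Aᵀ(y - Ax)` and
`-u(1 - b)(x̃ - x)` of the two quadratic terms.
-/

/-- Soft thresholding operator `η(x; θ)`. -/
noncomputable def softThresh (x θ : ℝ) : ℝ :=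
  if x > θ then x - θ else if x < -θ then x + θ else 0

open Matrix Set

variable {ι κ : Type*} [Fintype ι] [Fintype κ]

/-- `g` is a subgradient at `x` of the function `f` on `ℝ^ι`, in the sense of convex analysis. The
vector `g` acts through the dot product, and the affine minorant is required on all of `ℝ^ι`. -/
def HasSubgradientAt (f : (ι → ℝ) → ℝ) (g x : ι → ℝ) : Prop :=
  ∀ z, f x + g ⬝ᵥ (z - x) ≤ f z

namespace HasSubgradientAt

variable {f f₁ f₂ : (ι → ℝ) → ℝ} {g g₁ g₂ x : ι → ℝ}

theorem isMinOn_univ (h : HasSubgradientAt f 0 x) : IsMinOn f univ x :=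
  isMinOn_univ_iff.2 fun z => by simpa using h z

theorem add (h₁ : HasSubgradientAt f₁ g₁ x) (h₂ : HasSubgradientAt f₂ g₂ x) :
    HasSubgradientAt (fun z => f₁ z + f₂ z) (g₁ + g₂) x := fun z => by
  rw [add_dotProduct]
  linarith [h₁ z, h₂ z]

theorem const_mul {c : ℝ} (hc : 0 ≤ c) (h : HasSubgradientAt f g x) :
    HasSubgradientAt (fun z => c * f z) (c • g) x := fun z => by
  rw [smul_dotProduct, smul_eq_mul, ← mul_add]
  exact mul_le_mul_of_nonneg_left (h z) hc

end HasSubgradientAt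

/-- The least-squares loss `½‖y - Az‖₂²`, as a function of `z`. With `A = 1` it is the quadratic
penalty `½‖y - z‖₂²`. -/
noncomputable def leastSquares (A : Matrix κ ι ℝ) (y : κ → ℝ) (z : ι → ℝ) : ℝ :=
  (1 / 2) * ∑ j, (y j - (A *ᵥ z) j) ^ 2

theorem leastSquares_eq_add (A : Matrix κ ι ℝ) (y : κ → ℝ) (x z : ι → ℝ) :
    leastSquares A y z = leastSquares A y x + (Aᵀ *ᵥ (A *ᵥ x - y)) ⬝ᵥ (z - x)
      + (1 / 2) * ∑ j, ((A *ᵥ (z - x)) j) ^ 2 := by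
  have adjoint : (Aᵀ *ᵥ (A *ᵥ x - y)) ⬝ᵥ (z - x) = (A *ᵥ x - y) ⬝ᵥ (A *ᵥ (z - x)) := by
    rw [mulVec_transpose, dotProduct_mulVec]
  rw [adjoint, mulVec_sub]
  simp only [leastSquares, dotProduct, Finset.mul_sum, ← Finset.sum_add_distrib, Pi.sub_apply]
  exact Finset.sum_congr rfl fun j _ => by ring

theorem hasSubgradientAt_leastSquares (A : Matrix κ ι ℝ) (y : κ → ℝ) (x : ι → ℝ) :
    HasSubgradientAt (leastSquares A y) (Aᵀ *ᵥ (A *ᵥ x - y)) x := fun z => by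
  rw [leastSquares_eq_add A y x z]
  exact le_add_of_nonneg_right (by positivity)

theorem hasSubgradientAt_mul_sum_abs {θ : ℝ} {g x : ι → ℝ} (hg : ∀ i, |g i| ≤ θ)
    (hgx : g ⬝ᵥ x = θ * ∑ i, |x i|) :
    HasSubgradientAt (fun z => θ * ∑ i, |z i|) g x := fun z =>
  calc θ * ∑ i, |x i| + g ⬝ᵥ (z - x)
      = ∑ i, g i * z i := by rw [dotProduct_sub, hgx, add_sub_cancel, dotProduct]
    _ ≤ ∑ i, θ * |z i| := Finset.sum_le_sum fun i _ => by
        grw [le_abs_self (g i * z i), abs_mul, hg i]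
    _ = θ * ∑ i, |z i| := (Finset.mul_sum ..).symm

theorem abs_sub_softThresh_le {θ : ℝ} (hθ : 0 ≤ θ) (v : ℝ) : |v - softThresh v θ| ≤ θ := by
  unfold softThresh
  split_ifs <;> rw [abs_le] <;> constructor <;> linarith

theorem sub_softThresh_mul_softThresh (v θ : ℝ) :
    (v - softThresh v θ) * softThresh v θ = θ * |softThresh v θ| := by
  unfold softThresh
  split_ifs with hpos hneg
  · rw [abs_of_pos (sub_pos.2 hpos), sub_sub_cancel]
  · rw [abs_of_neg (by linarith)]
    ring
  · simp

theorem hasSubgradientAt_mul_sum_abs_of_eq_softThresh {θ : ℝ} (hθ : 0 ≤ θ) {v x : ι → ℝ}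
    (hx : ∀ i, x i = softThresh (v i) θ) :
    HasSubgradientAt (fun z => θ * ∑ i, |z i|) (v - x) x := by
  obtain rfl : x = fun i => softThresh (v i) θ := funext hx
  refine hasSubgradientAt_mul_sum_abs (fun i => abs_sub_softThresh_le hθ (v i)) ?_
  rw [Finset.mul_sum]
  exact Finset.sum_congr rfl fun i _ => sub_softThresh_mul_softThresh (v i) θ

/-- For a convex penalty `P`, the hypothesis `hx` says that `x` is the image under the proximal map
of `P` of the vector that the iteration feeds to its denoiser. -/
theorem genp_amp_fixed_point_is_genp_lasso_minimizer_general [DecidableEq ι]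
    (A : Matrix κ ι ℝ) (y : κ → ℝ) (xt : ι → ℝ) (P : (ι → ℝ) → ℝ) {u b : ℝ}
    (hu : 0 ≤ u) (hb : b ≤ 1) {x : ι → ℝ} {r : κ → ℝ}
    (hx : HasSubgradientAt P ((u / (1 + u)) • xt + (1 / (1 + u)) • (x + Aᵀ *ᵥ r) - x) x)
    (hr : r = y - A *ᵥ x + b • r) :
    IsMinOn (fun z => leastSquares A y z + (1 + u) * (1 - b) * P z
      + u * (1 - b) * leastSquares 1 xt z) univ x := by
  have : 0 ≤ 1 - b := sub_nonneg.2 hb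
  have residual : A *ᵥ x - y = -(1 - b) • r := by linear_combination (norm := module) hr
  have stationary : Aᵀ *ᵥ (A *ᵥ x - y)
      + ((1 + u) * (1 - b)) • ((u / (1 + u)) • xt + (1 / (1 + u)) • (x + Aᵀ *ᵥ r) - x)
      + (u * (1 - b)) • (1ᵀ *ᵥ (1 *ᵥ x - xt)) = 0 := by
    rw [residual, mulVec_smul, transpose_one, one_mulVec, one_mulVec]
    ext i
    simp only [Pi.add_apply, Pi.sub_apply, Pi.smul_apply, Pi.zero_apply, smul_eq_mul]
    field_simp
    ring
  apply HasSubgradientAt.isMinOn_univ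
  rw [← stationary]
  exact ((hasSubgradientAt_leastSquares A y x).add (hx.const_mul (by positivity))).add
    ((hasSubgradientAt_leastSquares 1 xt x).const_mul (by positivity))

/-- If `(x*, r*)` is a fixed point of the GENP-AMP iteration with fixed parameters
`θ > 0`, `u ≥ 0`, `b < 1`, then `x*` is a global minimizer of the GENP-LASSO objective
with `λ = (1+u)·θ·(1−b)` and `τ = u·(1−b)`. -/
theorem genp_amp_fixed_point_is_genp_lasso_minimizer
    {m n : ℕ} (A : Matrix (Fin m) (Fin n) ℝ) (y : Fin m → ℝ) (xt : Fin n → ℝ)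
    (θ u b : ℝ) (hθ : 0 < θ) (hu : 0 ≤ u) (hb : b < 1)
    (xs : Fin n → ℝ) (rs : Fin m → ℝ)
    (hfix_x : ∀ i, xs i =
      softThresh ((u / (1 + u)) * xt i
        + (1 / (1 + u)) * (xs i + (A.transpose.mulVec rs) i)) θ)
    (hfix_r : ∀ j, rs j = y j - (A.mulVec xs) j + b * rs j) :
    ∀ z : Fin n → ℝ,
      (1/2) * ∑ j, (y j - (A.mulVec xs) j)^2
        + ((1 + u) * θ * (1 - b)) * ∑ i, |xs i|
        + ((u * (1 - b)) / 2) * ∑ i, (xt i - xs i)^2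
      ≤ (1/2) * ∑ j, (y j - (A.mulVec z) j)^2
        + ((1 + u) * θ * (1 - b)) * ∑ i, |z i|
        + ((u * (1 - b)) / 2) * ∑ i, (xt i - z i)^2 := by
  intro z
  have h := isMinOn_univ_iff.1 (genp_amp_fixed_point_is_genp_lasso_minimizer_general A y xt _ hu
    hb.le (hasSubgradientAt_mul_sum_abs_of_eq_softThresh hθ.le hfix_x) (funext hfix_r)) z
  simp only [leastSquares, one_mulVec] at h
  linarith
end

section
/- Let Z be a standard Gaussian random variable (law N(0,1)) and let α ≥ 0. Then the function g(μ) = E[(η(μ + Z; α) − μ)²] is monotone nondecreasing on [0, ∞). -/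
/-!
The monotonicity already holds pointwise in the noise: `η(μ + z; α) - μ` is the projection of `-μ`
onto the interval `[z - α, z + α]`. As `μ ≥ 0` grows, `-μ` moves away from `0` through the
nonpositive reals, and the absolute value of its projection can only grow: either the interval lies
to the right of `0` and the projection stays at the left endpoint, or the projection is nonpositive
and nonincreasing. Since `η` moves its argument by at most `α`, the error is square integrable as
soon as the noise is.
-/

open MeasureTheory ProbabilityTheory

lemma antitoneOn_abs_max {G : Type*} [AddCommGroup G] [LinearOrder G] [IsOrderedAddMonoid G]
    (c : G) : AntitoneOn (fun x => |max c x|) (Set.Iic 0) := by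
  intro x hx y hy hxy
  rw [Set.mem_Iic] at hx hy
  rcases le_total 0 c with hc | hc
  · simp only [max_eq_left (hx.trans hc), max_eq_left (hy.trans hc), le_refl]
  · simp only [abs_of_nonpos (max_le hc hx), abs_of_nonpos (max_le hc hy)]
    exact neg_le_neg (max_le_max_left c hxy)

section SoftThresh

variable {θ : ℝ}

lemma softThresh_eq_max_min (hθ : 0 ≤ θ) (x : ℝ) :
    softThresh x θ = max (x - θ) (min 0 (x + θ)) := by
  unfold softThresh
  grind

lemma continuous_softThresh (hθ : 0 ≤ θ) : Continuous fun x => softThresh x θ := by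
  simp_rw [softThresh_eq_max_min hθ]
  fun_prop

lemma abs_softThresh_sub_self_le (hθ : 0 ≤ θ) (x : ℝ) : |softThresh x θ - x| ≤ θ := by
  rw [softThresh_eq_max_min hθ]
  grind

lemma softThresh_add_sub_eq_max_min (hθ : 0 ≤ θ) (μ z : ℝ) :
    softThresh (μ + z) θ - μ = max (z - θ) (min (-μ) (z + θ)) := by
  rw [softThresh_eq_max_min hθ, ← max_sub_sub_right, ← min_sub_sub_right]
  ring_nf

lemma monotoneOn_abs_softThresh_add_sub (hθ : 0 ≤ θ) (z : ℝ) :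
    MonotoneOn (fun μ => |softThresh (μ + z) θ - μ|) (Set.Ici 0) := by
  intro a ha b hb hab
  simp only [softThresh_add_sub_eq_max_min hθ]
  have nonpos_of_mem {μ : ℝ} (hμ : μ ∈ Set.Ici 0) : min (-μ) (z + θ) ≤ 0 :=
    min_le_of_left_le (neg_nonpos.mpr hμ)
  exact antitoneOn_abs_max (z - θ) (nonpos_of_mem hb) (nonpos_of_mem ha)
    (min_le_min_right _ (neg_le_neg hab))

lemma memLp_softThresh_add_sub (hθ : 0 ≤ θ) {ν : Measure ℝ} [IsFiniteMeasure ν]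
    {p : ENNReal} (hν : MemLp id p ν) (μ : ℝ) :
    MemLp (fun z => softThresh (μ + z) θ - μ) p ν := by
  have displacement_memLp : MemLp (fun z => softThresh (μ + z) θ - (μ + z)) p ν := by
    have hcont : Continuous fun z => softThresh (μ + z) θ - (μ + z) :=
      ((continuous_softThresh hθ).sub continuous_id).comp (continuous_const_add μ)
    exact .of_bound hcont.aestronglyMeasurable θ
      (ae_of_all _ fun z => abs_softThresh_sub_self_le hθ (μ + z))
  refine (displacement_memLp.add hν).ae_eq (ae_of_all _ fun z => ?_)
  simp only [Pi.add_apply, id_eq]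
  ring

end SoftThresh

theorem soft_thresholding_mse_monotone_general {α : ℝ} (hα : 0 ≤ α) {ν : Measure ℝ}
    [IsFiniteMeasure ν] (hν : MemLp id 2 ν) :
    MonotoneOn (fun μ : ℝ => ∫ z, (softThresh (μ + z) α - μ) ^ 2 ∂ν) (Set.Ici 0) := by
  intro a ha b hb hab
  have integrable_sq_error (μ : ℝ) : Integrable (fun z => (softThresh (μ + z) α - μ) ^ 2) ν :=
    (memLp_softThresh_add_sub hα hν μ).integrable_sq
  exact integral_mono (integrable_sq_error a) (integrable_sq_error b) fun z =>
    sq_le_sq.mpr (monotoneOn_abs_softThresh_add_sub hα z ha hb hab)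

/-- For `Z ~ N(0,1)` and `α ≥ 0`, the soft-thresholding MSE
`g(μ) = E[(η(μ + Z; α) − μ)²]` is monotone nondecreasing on `[0, ∞)`. -/
theorem soft_thresholding_mse_monotone (α : ℝ) (hα : 0 ≤ α) :
    MonotoneOn
      (fun μ : ℝ => ∫ z, (softThresh (μ + z) α - μ)^2 ∂(gaussianReal 0 1))
      (Set.Ici 0) :=
  soft_thresholding_mse_monotone_general hα (memLp_id_gaussianReal 2)
end

section
/- Let δ > 0, γ > 0 and M > 0, and let q ≥ 0 satisfy q² ≤ M · γ²·(1 + q²/δ) / (γ² + 1 + q²/δ). Then q² ≤ (−G + √(G² + 4δγ²M)) / 2, where G = δγ² + δ − γ²M. -/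
/-- The simplified noise-plus-interference level `npi` of GENP-LASSO at mean-squared error `x`,
for sampling ratio `δ` and noise variance ratio `s`; in the paper `s = γ²` and `x = q²`. -/
def noisePlusInterference {K : Type*} [Field K] (δ s x : K) : K :=
  s * (1 + x / δ) / (s + 1 + x / δ)

theorem le_mul_noisePlusInterference_iff_quadratic_nonpos {K : Type*} [Field K] [LinearOrder K]
    [IsStrictOrderedRing K] {δ s M x : K} (hδ : 0 < δ) (hden : 0 < s + 1 + x / δ) :
    x ≤ M * noisePlusInterference δ s x ↔
      x * x + (δ * s + δ - s * M) * x - δ * s * M ≤ 0 := by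
  have cleared_fractions : δ * (x * (s + 1 + x / δ) - M * (s * (1 + x / δ))) =
      x * x + (δ * s + δ - s * M) * x - δ * s * M := by
    field_simp
    ring
  rw [noisePlusInterference, ← mul_div_assoc, le_div_iff₀ hden, ← sub_nonpos,
    ← cleared_fractions, ← mul_le_mul_iff_right₀ hδ, mul_zero]

theorem le_larger_root_of_quadratic_nonpos {a b c x : ℝ} (ha : 0 < a)
    (h : a * (x * x) + b * x + c ≤ 0) : x ≤ (-b + √(discrim a b c)) / (2 * a) := by
  have sq_eq_discrim_add : (2 * a * x + b) ^ 2 =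
      discrim a b c + 4 * a * (a * (x * x) + b * x + c) := by
    rw [discrim]
    ring
  have sq_le_discrim : (2 * a * x + b) ^ 2 ≤ discrim a b c := by
    rw [sq_eq_discrim_add]
    exact add_le_of_nonpos_right (mul_nonpos_of_nonneg_of_nonpos (by positivity) h)
  rw [le_div_iff₀ (by positivity)]
  linarith [Real.le_sqrt_of_sq_le sq_le_discrim]

/-- Key algebraic step bounding the minimax risk of GENP-LASSO: if
`q² ≤ M·γ²(1 + q²/δ)/(γ² + 1 + q²/δ)` then
`q² ≤ (−G + √(G² + 4δγ²M))/2` with `G = δγ² + δ − γ²M`. -/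
theorem genp_lasso_minimax_upper_bound
    (δ γ M q : ℝ) (hδ : 0 < δ) (hγ : 0 < γ) (hM : 0 < M) (hq : 0 ≤ q)
    (h : q^2 ≤ M * (γ^2 * (1 + q^2/δ)) / (γ^2 + 1 + q^2/δ)) :
    q^2 ≤ (-(δ*γ^2 + δ - γ^2*M)
        + Real.sqrt ((δ*γ^2 + δ - γ^2*M)^2 + 4*δ*γ^2*M)) / 2 := by
  have le_mul_npi : q ^ 2 ≤ M * noisePlusInterference δ (γ ^ 2) (q ^ 2) := by
    rwa [noisePlusInterference, ← mul_div_assoc]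
  have quadratic_nonpos : q ^ 2 * q ^ 2 + (δ * γ ^ 2 + δ - γ ^ 2 * M) * q ^ 2
      - δ * γ ^ 2 * M ≤ 0 :=
    (le_mul_noisePlusInterference_iff_quadratic_nonpos hδ (by positivity)).mp le_mul_npi
  have discrim_eq : discrim 1 (δ * γ ^ 2 + δ - γ ^ 2 * M) (-(δ * γ ^ 2 * M)) =
      (δ * γ ^ 2 + δ - γ ^ 2 * M) ^ 2 + 4 * δ * γ ^ 2 * M := by
    rw [discrim]
    ring
  rw [← discrim_eq, ← mul_one (2 : ℝ)]
  exact le_larger_root_of_quadratic_nonpos one_pos (by linarith)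
end

section
/- Let δ > 0, γ > 0 and M > 0, and let q ≥ 0 satisfy q² ≥ M · γ²·(1 + q²/δ) / (γ² + 1 + q²/δ). Then q² ≥ (−G + √(G² + 4δγ²M)) / 2, where G = δγ² + δ − γ²M. -/
/-!
Write `npi(x) = γ²(1 + x/δ)/(γ² + 1 + x/δ)`. Clearing denominators, `M · npi(x) ≤ x` becomes
`0 ≤ f(x)` for the monic quadratic `f(t) = t² + G t - δγ²M`. At `t = -δ`, where `1 + t/δ`
vanishes, `f(-δ) = -δ²γ² ≤ 0`, so `-δ` lies between the roots of `f`. Hence a point `x > -δ`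
satisfies `0 ≤ f(x)` exactly when it is at least the larger root.
-/

section MonicQuadratic

variable {b p x y : ℝ}

lemma larger_root_le_iff :
    (-b + √(b ^ 2 + 4 * p)) / 2 ≤ x ↔ 0 ≤ 2 * x + b ∧ p ≤ x ^ 2 + b * x := by
  calc (-b + √(b ^ 2 + 4 * p)) / 2 ≤ x
      ↔ √(b ^ 2 + 4 * p) ≤ 2 * x + b := by constructor <;> intro h <;> linarith
    _ ↔ 0 ≤ 2 * x + b ∧ b ^ 2 + 4 * p ≤ (2 * x + b) ^ 2 := Real.sqrt_le_iff
    _ ↔ 0 ≤ 2 * x + b ∧ p ≤ x ^ 2 + b * x :=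
      and_congr_right fun _ ↦ by constructor <;> intro h <;> linarith

lemma larger_root_le_iff_of_lt (hy : y ^ 2 + b * y ≤ p) (hyx : y < x) :
    (-b + √(b ^ 2 + 4 * p)) / 2 ≤ x ↔ p ≤ x ^ 2 + b * x := by
  refine larger_root_le_iff.trans (and_iff_right_of_imp fun hx ↦ ?_)
  have secant : 0 ≤ (x - y) * (x + y + b) := by linarith
  have slope_nonneg : 0 ≤ x + y + b := nonneg_of_mul_nonneg_right secant (sub_pos.mpr hyx)
  linarith

end MonicQuadratic

lemma mul_noise_plus_interference_le_iff {δ s x : ℝ} (M : ℝ) (hδ : 0 < δ) (hs : 0 ≤ s)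
    (hx : -δ < x) :
    M * (s * (1 + x / δ)) / (s + 1 + x / δ) ≤ x ↔
      δ * s * M ≤ x ^ 2 + (δ * s + δ - s * M) * x := by
  have den_pos : 0 < δ * s + δ + x := by linarith [mul_nonneg hδ.le hs]
  have single_fraction : M * (s * (1 + x / δ)) / (s + 1 + x / δ) =
      M * s * (δ + x) / (δ * s + δ + x) := by
    rw [← mul_div_mul_left _ _ hδ.ne']
    congr 1 <;> field_simp
  rw [single_fraction, div_le_iff₀ den_pos]
  constructor <;> intro h <;> linarith

theorem genp_lasso_minimax_lower_bound_general {δ x : ℝ} (γ M : ℝ) (hδ : 0 < δ) (hx : -δ < x) :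
    (-(δ * γ ^ 2 + δ - γ ^ 2 * M)
        + √((δ * γ ^ 2 + δ - γ ^ 2 * M) ^ 2 + 4 * δ * γ ^ 2 * M)) / 2 ≤ x ↔
      M * (γ ^ 2 * (1 + x / δ)) / (γ ^ 2 + 1 + x / δ) ≤ x := by
  have quadratic_at_neg_δ :
      (-δ) ^ 2 + (δ * γ ^ 2 + δ - γ ^ 2 * M) * (-δ) ≤ δ * γ ^ 2 * M := by
    linarith [sq_nonneg (δ * γ)]
  rw [mul_noise_plus_interference_le_iff M hδ (sq_nonneg γ) hx,
    ← larger_root_le_iff_of_lt quadratic_at_neg_δ hx]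
  simp only [mul_assoc]

/-- Matching lower-bound step for the minimax risk of GENP-LASSO: if
`q² ≥ M·γ²(1 + q²/δ)/(γ² + 1 + q²/δ)` then
`q² ≥ (−G + √(G² + 4δγ²M))/2` with `G = δγ² + δ − γ²M`. -/
theorem genp_lasso_minimax_lower_bound
    (δ γ M q : ℝ) (hδ : 0 < δ) (hγ : 0 < γ) (hM : 0 < M) (hq : 0 ≤ q)
    (h : q^2 ≥ M * (γ^2 * (1 + q^2/δ)) / (γ^2 + 1 + q^2/δ)) :
    q^2 ≥ (-(δ*γ^2 + δ - γ^2*M)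
        + Real.sqrt ((δ*γ^2 + δ - γ^2*M)^2 + 4*δ*γ^2*M)) / 2 :=
  (genp_lasso_minimax_lower_bound_general γ M hδ (by linarith [sq_nonneg q])).mpr h
end

section
/- Fix δ > 0 and m with 0 < m ≤ 1, and define M*(δ, m, g) = (−G + √(G² + 4δ·g·m)) / 2 for g > 0, where G = δ·g + δ − g·m. Then the function g ↦ M*(δ, m, g) is strictly increasing on (0, ∞). -/
/-!
The value `x = M*(δ, m, g)` is the larger root of `q_g(x) = x² + Gx − δgm`, which, grouped by
powers of `g`, reads `q_g(x) = x(x + δ) − g(δm + (m − δ)x)`. At this root the factor of `g` is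
positive, so raising `g` to some `g' > g` makes `q_{g'}(x)` negative. Hence `x` lies strictly below
the larger root of `q_{g'}`, which is `M*(δ, m, g')`.
-/

/-- The larger root of the monic quadratic `x² + p x - c`. The constant term carries a minus sign
so that `M*(δ, m, g)` is `largerRoot G (δ g m)`. When the discriminant `p² + 4c` is negative the
value is the junk `-p / 2`. -/
noncomputable def largerRoot (p c : ℝ) : ℝ :=
  (-p + √(p ^ 2 + 4 * c)) / 2

section largerRoot

variable {p c p' c' y : ℝ}

theorem largerRoot_sq_add_mul (h : 0 ≤ p ^ 2 + 4 * c) :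
    largerRoot p c ^ 2 + p * largerRoot p c = c := by
  unfold largerRoot
  linear_combination Real.sq_sqrt h / 4

theorem lt_largerRoot_of_sq_add_mul_lt (h : y ^ 2 + p * y < c) : y < largerRoot p c := by
  have : 2 * y + p < √(p ^ 2 + 4 * c) := Real.lt_sqrt_of_sq_lt (by linarith)
  unfold largerRoot
  linarith

theorem largerRoot_nonneg (hc : 0 ≤ c) : 0 ≤ largerRoot p c := by
  have : p ≤ √(p ^ 2 + 4 * c) := Real.le_sqrt_of_sq_le (by linarith)
  unfold largerRoot
  linarith

theorem largerRoot_lt_largerRoot (h : 0 ≤ p ^ 2 + 4 * c)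
    (hlt : (p' - p) * largerRoot p c < c' - c) : largerRoot p c < largerRoot p' c' := by
  apply lt_largerRoot_of_sq_add_mul_lt
  linarith [largerRoot_sq_add_mul h]

end largerRoot

theorem add_mul_pos_of_mul_add_eq {δ m g x : ℝ} (hδ : 0 < δ) (hm : 0 < m) (hg : 0 ≤ g)
    (hx : 0 ≤ x) (hroot : x * (x + δ) = g * (δ * m + (m - δ) * x)) :
    0 < δ * m + (m - δ) * x := by
  rcases hx.eq_or_lt with rfl | hx
  · simpa using mul_pos hδ hm
  · have hpos : 0 < g * (δ * m + (m - δ) * x) := hroot ▸ by positivity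
    exact pos_of_mul_pos_right hpos hg

theorem genp_lasso_minimax_strictMono_in_gamma_general
    (δ m : ℝ) (hδ : 0 < δ) (hm : 0 < m) :
    StrictMonoOn
      (fun g : ℝ => (-(δ*g + δ - g*m)
          + Real.sqrt ((δ*g + δ - g*m)^2 + 4*δ*g*m)) / 2)
      (Set.Ici 0) := by
  suffices StrictMonoOn (fun g ↦ largerRoot (δ * g + δ - g * m) (δ * (g * m))) (Set.Ici 0) by
    simpa only [largerRoot, mul_assoc] using this
  intro a (ha : 0 ≤ a) b _ hab
  have hc : 0 ≤ δ * (a * m) := by positivity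
  have hdisc : 0 ≤ (δ * a + δ - a * m) ^ 2 + 4 * (δ * (a * m)) := by positivity
  apply largerRoot_lt_largerRoot hdisc
  set x := largerRoot (δ * a + δ - a * m) (δ * (a * m))
  have hroot : x * (x + δ) = a * (δ * m + (m - δ) * x) := by
    linear_combination largerRoot_sq_add_mul hdisc
  have hfactor : 0 < δ * m + (m - δ) * x :=
    add_mul_pos_of_mul_add_eq hδ hm ha (largerRoot_nonneg hc) hroot
  linarith [mul_pos (sub_pos.2 hab) hfactor]

/-- The GENP-LASSO minimax noise sensitivity
`M*(δ, m, g) = (−G + √(G² + 4δgm))/2`, `G = δg + δ − gm`,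
is strictly increasing in the noise-variance ratio `g` on `(0, ∞)`. -/
theorem genp_lasso_minimax_strictMono_in_gamma
    (δ m : ℝ) (hδ : 0 < δ) (hm0 : 0 < m) (hm1 : m ≤ 1) :
    StrictMonoOn
      (fun g : ℝ => (-(δ*g + δ - g*m)
          + Real.sqrt ((δ*g + δ - g*m)^2 + 4*δ*g*m)) / 2)
      (Set.Ioi 0) :=
  (genp_lasso_minimax_strictMono_in_gamma_general δ m hδ hm0).mono Set.Ioi_subset_Ici_self
end

section
/- Let δ > 0, γ > 0 and m with 0 < m < δ, and define M*(δ, m, γ²) = (−G + √(G² + 4δγ²m)) / 2 with G = δγ² + δ − γ²m. Then M*(δ, m, γ²) ≤ m / (1 − m/δ); that is, the minimax risk bound of GENP-LASSO never exceeds the LASSO minimax risk bound M^b = M^±/(1 − M^±/δ). -/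
/-!
`M*` is the larger root of `x² + G x - δ γ² m = x (x + δ) + γ² (x (δ - m) - m δ)`.
The LASSO bound `B = m / (1 - m / δ)` solves `B (δ - m) = m δ`, so at `x = B` the bracket weighted
by `γ²` vanishes and only `B (B + δ) ≥ 0` is left. As `B` also lies to the right of the vertex
`-G / 2`, it is at least the larger root.
-/

theorem larger_quadratic_root_le_iff {a b c x : ℝ} (ha : 0 < a) :
    (-b + √(discrim a b c)) / (2 * a) ≤ x ↔
      0 ≤ 2 * a * x + b ∧ 0 ≤ a * (x * x) + b * x + c := by
  have complete_square :
      (2 * a * x + b) ^ 2 - discrim a b c = 4 * a * (a * (x * x) + b * x + c) := by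
    rw [discrim]
    ring
  calc (-b + √(discrim a b c)) / (2 * a) ≤ x
      ↔ √(discrim a b c) ≤ 2 * a * x + b := by
        rw [div_le_iff₀' (by positivity), neg_add_le_iff_le_add, add_comm]
    _ ↔ 0 ≤ 2 * a * x + b ∧ 0 ≤ a * (x * x) + b * x + c := by
        rw [Real.sqrt_le_iff, ← sub_nonneg (b := discrim a b c), complete_square,
          mul_nonneg_iff_of_pos_left (by positivity)]

/-- The minimax risk bound `M^b` of LASSO without side information, at sampling ratio `δ` and
soft-thresholding minimax MSE `m`; meaningful for `m < δ`. -/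
noncomputable def lassoRiskBound (δ m : ℝ) : ℝ :=
  m / (1 - m / δ)

/-- The coefficient `G` of the quadratic equation for the GENP-LASSO minimax risk, with `t`
standing for the noise variance ratio `γ²`. -/
def genpLinearCoeff (δ m t : ℝ) : ℝ :=
  δ * t + δ - t * m

/-- The minimax noise sensitivity `M*(δ, m, t)` of GENP-LASSO, with `t` standing for the noise
variance ratio `γ²`. -/
noncomputable def genpMinimaxRisk (δ m t : ℝ) : ℝ :=
  (-genpLinearCoeff δ m t + √(genpLinearCoeff δ m t ^ 2 + 4 * δ * t * m)) / 2

section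

variable {δ m t : ℝ}

theorem lassoRiskBound_nonneg (hδ : 0 < δ) (hm : 0 ≤ m) (hmδ : m ≤ δ) :
    0 ≤ lassoRiskBound δ m :=
  div_nonneg hm (sub_nonneg.mpr ((div_le_one hδ).mpr hmδ))

theorem lassoRiskBound_mul_sub (hδ : δ ≠ 0) (hmδ : m ≠ δ) :
    lassoRiskBound δ m * (δ - m) = m * δ := by
  have hsub : δ - m ≠ 0 := sub_ne_zero.mpr hmδ.symm
  rw [lassoRiskBound, one_sub_div hδ]
  field_simp

theorem genpLinearCoeff_nonneg (hδ : 0 ≤ δ) (ht : 0 ≤ t) (hmδ : m ≤ δ) :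
    0 ≤ genpLinearCoeff δ m t := by
  have hmul : 0 ≤ t * (δ - m) := mul_nonneg ht (sub_nonneg.mpr hmδ)
  rw [genpLinearCoeff]
  linarith

theorem genpMinimaxRisk_le_iff {x : ℝ} :
    genpMinimaxRisk δ m t ≤ x ↔
      0 ≤ 2 * x + genpLinearCoeff δ m t ∧
        0 ≤ x * (x + δ) + t * (x * (δ - m) - m * δ) := by
  have hdiscrim : genpLinearCoeff δ m t ^ 2 + 4 * δ * t * m =
      discrim 1 (genpLinearCoeff δ m t) (-(δ * t * m)) := by
    rw [discrim]
    ring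
  have hquadratic : 1 * (x * x) + genpLinearCoeff δ m t * x + -(δ * t * m) =
      x * (x + δ) + t * (x * (δ - m) - m * δ) := by
    rw [genpLinearCoeff]
    ring
  rw [genpMinimaxRisk, hdiscrim, ← hquadratic]
  simpa only [mul_one] using larger_quadratic_root_le_iff (x := x) one_pos

end

/-- The GENP-LASSO minimax risk bound never exceeds the LASSO minimax risk bound:
for `0 < m < δ`, `M*(δ, m, γ²) ≤ m/(1 − m/δ)`. -/
theorem genp_lasso_minimax_le_lasso_bound
    (δ γ m : ℝ) (hδ : 0 < δ) (hγ : 0 < γ) (hm0 : 0 < m) (hmδ : m < δ) :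
    (-(δ*γ^2 + δ - γ^2*m)
        + Real.sqrt ((δ*γ^2 + δ - γ^2*m)^2 + 4*δ*γ^2*m)) / 2
      ≤ m / (1 - m/δ) := by
  change genpMinimaxRisk δ m (γ ^ 2) ≤ lassoRiskBound δ m
  have hB : 0 ≤ lassoRiskBound δ m := lassoRiskBound_nonneg hδ hm0.le hmδ.le
  have hG : 0 ≤ genpLinearCoeff δ m (γ ^ 2) :=
    genpLinearCoeff_nonneg hδ.le (sq_nonneg γ) hmδ.le
  refine genpMinimaxRisk_le_iff.mpr ⟨by positivity, ?_⟩
  rw [lassoRiskBound_mul_sub hδ.ne' hmδ.ne, sub_self, mul_zero, add_zero]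
  positivity
end

section
/- Fix γ > 0 and m with 0 < m ≤ 1, and define f(δ) = (−G(δ) + √(G(δ)² + 4δγ²m)) / 2 for δ ≥ 0, where G(δ) = δγ² + δ − γ²m. Then f is monotone nonincreasing on [0, ∞); in particular f(δ) ≤ f(0) = m·γ² for every δ ≥ 0, so adding compressed measurements (increasing δ at fixed sparsity parameter m) never increases the GENP-LASSO minimax risk bound. -/
/-!
Write `g = γ²`. The noise sensitivity is the larger root of
`q_δ(X) = X² + G(δ) X - δ g m = X² - g m X + δ ((g + 1) X - g m)`.
The parabolas `q_δ` all agree at `x₀ = g m / (g + 1)`, where their common value `-g x₀²` is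
nonpositive, so the larger root of each is at least `x₀`. To the right of `x₀` the value `q_δ(X)`
increases with `δ`, so the larger root moves to the left.
-/

/-- The larger root of the monic quadratic `X² + b X + c`. When the discriminant is negative, the
convention `√t = 0` for `t < 0` makes this the abscissa `-b / 2` of the vertex. -/
noncomputable def upperRoot (b c : ℝ) : ℝ :=
  (-b + √(b ^ 2 - 4 * c)) / 2

section UpperRoot

variable {b b' c c' x : ℝ}

lemma upperRoot_le_iff : upperRoot b c ≤ x ↔ 0 ≤ 2 * x + b ∧ 0 ≤ x ^ 2 + b * x + c :=
  calc upperRoot b c ≤ x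
    _ ↔ √(b ^ 2 - 4 * c) ≤ 2 * x + b := by
      unfold upperRoot
      constructor <;> intro h <;> linarith
    _ ↔ 0 ≤ 2 * x + b ∧ b ^ 2 - 4 * c ≤ (2 * x + b) ^ 2 := Real.sqrt_le_iff
    _ ↔ 0 ≤ 2 * x + b ∧ 0 ≤ x ^ 2 + b * x + c :=
      and_congr_right fun _ => by constructor <;> intro h <;> linarith

lemma le_upperRoot_of_eval_nonpos (h : x ^ 2 + b * x + c ≤ 0) : x ≤ upperRoot b c := by
  have hsqrt : 2 * x + b ≤ √(b ^ 2 - 4 * c) := Real.le_sqrt_of_sq_le (by linarith)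
  unfold upperRoot
  linarith

lemma upperRoot_le_upperRoot (hb : b ≤ b')
    (h : 0 ≤ (b' - b) * upperRoot b c + (c' - c)) : upperRoot b' c' ≤ upperRoot b c := by
  obtain ⟨hvertex, heval⟩ := upperRoot_le_iff.1 (le_refl (upperRoot b c))
  exact upperRoot_le_iff.2 ⟨by linarith, by linarith⟩

lemma upperRoot_zero_right (hb : b ≤ 0) : upperRoot b 0 = -b := by
  have hsqrt : √(b ^ 2 - 4 * 0) = -b := by
    rw [mul_zero, sub_zero, Real.sqrt_sq_eq_abs, abs_of_nonpos hb]
  rw [upperRoot, hsqrt, add_self_div_two]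

end UpperRoot

/-- The minimax noise sensitivity `M*(δ, m, g)` of GENP-LASSO at sampling ratio `δ`, where `m` is
the soft-thresholding minimax MSE and `g = γ²` is the ratio of the side-information noise variance
to the measurement noise variance. -/
noncomputable def minimaxNoiseSensitivity (δ m g : ℝ) : ℝ :=
  (-(δ * g + δ - g * m) + √((δ * g + δ - g * m) ^ 2 + 4 * δ * g * m)) / 2

section NoiseSensitivity

variable {m g : ℝ}

lemma minimaxNoiseSensitivity_eq_upperRoot (δ m g : ℝ) :
    minimaxNoiseSensitivity δ m g = upperRoot (δ * g + δ - g * m) (-(δ * g * m)) := by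
  unfold minimaxNoiseSensitivity upperRoot
  ring_nf

lemma div_le_minimaxNoiseSensitivity (δ m : ℝ) (hg : 0 ≤ g) :
    g * m / (g + 1) ≤ minimaxNoiseSensitivity δ m g := by
  rw [minimaxNoiseSensitivity_eq_upperRoot]
  apply le_upperRoot_of_eval_nonpos
  set x₀ := g * m / (g + 1)
  have hx₀ : x₀ * (g + 1) = g * m := div_mul_cancel₀ _ (by positivity)
  calc x₀ ^ 2 + (δ * g + δ - g * m) * x₀ + -(δ * g * m)
    _ = -(g * x₀ ^ 2) := by linear_combination (x₀ + δ) * hx₀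
    _ ≤ 0 := neg_nonpos.2 (by positivity)

lemma antitone_minimaxNoiseSensitivity (m : ℝ) (hg : 0 ≤ g) :
    Antitone fun δ => minimaxNoiseSensitivity δ m g := by
  intro δ δ' hδ
  have hlower : g * m ≤ minimaxNoiseSensitivity δ m g * (g + 1) :=
    (div_le_iff₀ (by positivity)).1 (div_le_minimaxNoiseSensitivity δ m hg)
  simp only [minimaxNoiseSensitivity_eq_upperRoot] at hlower ⊢
  apply upperRoot_le_upperRoot
  · gcongr
  · linarith [mul_nonneg (sub_nonneg.2 hδ) (sub_nonneg.2 hlower)]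

lemma minimaxNoiseSensitivity_zero (h : 0 ≤ g * m) : minimaxNoiseSensitivity 0 m g = m * g := by
  calc minimaxNoiseSensitivity 0 m g
    _ = upperRoot (-(g * m)) 0 := by simp [minimaxNoiseSensitivity_eq_upperRoot]
    _ = m * g := by rw [upperRoot_zero_right (neg_nonpos.2 h), neg_neg, mul_comm]

end NoiseSensitivity

theorem genp_lasso_minimax_antitone_in_delta_general {m g : ℝ} (hg : 0 ≤ g) (hm : 0 ≤ m) :
    Antitone (fun δ => minimaxNoiseSensitivity δ m g) ∧ minimaxNoiseSensitivity 0 m g = m * g :=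
  ⟨antitone_minimaxNoiseSensitivity m hg, minimaxNoiseSensitivity_zero (mul_nonneg hg hm)⟩

/-- For fixed `γ > 0` and `0 < m ≤ 1`, the GENP-LASSO minimax risk bound
`f(δ) = (−G(δ) + √(G(δ)² + 4δγ²m))/2`, `G(δ) = δγ² + δ − γ²m`, is monotone
nonincreasing in the sampling ratio `δ` on `[0, ∞)`; in particular
`f(δ) ≤ f(0) = m·γ²` for every `δ ≥ 0`. -/
theorem genp_lasso_minimax_antitone_in_delta
    (γ m : ℝ) (hγ : 0 < γ) (hm0 : 0 < m) (hm1 : m ≤ 1) :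
    AntitoneOn
      (fun δ : ℝ => (-(δ*γ^2 + δ - γ^2*m)
          + Real.sqrt ((δ*γ^2 + δ - γ^2*m)^2 + 4*δ*γ^2*m)) / 2)
      (Set.Ici 0) ∧
    (-(0*γ^2 + 0 - γ^2*m)
        + Real.sqrt ((0*γ^2 + 0 - γ^2*m)^2 + 4*0*γ^2*m)) / 2 = m * γ^2 ∧
    (∀ δ : ℝ, 0 ≤ δ →
      (-(δ*γ^2 + δ - γ^2*m)
          + Real.sqrt ((δ*γ^2 + δ - γ^2*m)^2 + 4*δ*γ^2*m)) / 2 ≤ m * γ^2) := by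
  obtain ⟨hanti, hzero⟩ := genp_lasso_minimax_antitone_in_delta_general (sq_nonneg γ) hm0.le
  exact ⟨hanti.antitoneOn _, hzero, fun _ hδ => (hanti hδ).trans_eq hzero⟩
end
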